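/- Let K ∈ ℂ^{D×d} with K†K = 1_d, set Π = 1_D − KK† and Γ⁻¹ = 1_D + KK†, let L ∈ ℂ^{D×d}, and for Δ ∈ T_K St(D,d) define f_K(Δ) := 2KΔ†L* + Γ⁻¹L*Δ†K − ΠΔK†L* − ΠΔLᵀK. Then the tangent-space projection P_T(X) = X − K(K†X + X†K)/2 satisfies, for every Δ ∈ T_K St(D,d): P_T(f_K(Δ)) = −ΠΔK†L* − 2·skew(ΔLᵀ)K − 2K·skew(LᵀΔ), where skew(M) := (M − M†)/2. -/

import Mathlib

open Matrix

/-- The map `f_K(Δ) = 2KΔᴴL* + Γ⁻¹L*ΔᴴK − ΠΔKᴴL* − ΠΔLᵀK`, where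
`Π = 1 − KKᴴ` and `Γ⁻¹ = 1 + KKᴴ`. -/
noncomputable def stiefelFK {D d : ℕ} (K L Δ : Matrix (Fin D) (Fin d) ℂ) :
    Matrix (Fin D) (Fin d) ℂ :=
  (2 : ℂ) • (K * Δᴴ * L.map (starRingEnd ℂ)) +
    ((1 : Matrix (Fin D) (Fin D) ℂ) + K * Kᴴ) * L.map (starRingEnd ℂ) * Δᴴ * K -
    ((1 : Matrix (Fin D) (Fin D) ℂ) - K * Kᴴ) * Δ * Kᴴ * L.map (starRingEnd ℂ) -
    ((1 : Matrix (Fin D) (Fin D) ℂ) - K * Kᴴ) * Δ * Lᵀ * K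

/-- The skew-Hermitian part `skew(M) = (M − Mᴴ)/2`. -/
noncomputable def skewPart {n : ℕ} (M : Matrix (Fin n) (Fin n) ℂ) :
    Matrix (Fin n) (Fin n) ℂ :=
  (1 / 2 : ℂ) • (M - Mᴴ)

/-!
Since `KᴴK = 1`, left multiplication by `Kᴴ` kills `Π` and turns `Γ⁻¹` into `2Kᴴ`, so
`Kᴴ f_K(Δ) = 2S` with `S = ΔᴴL* + KᴴL*ΔᴴK`, and hence `P_T(f_K(Δ)) = f_K(Δ) - K(S + Sᴴ)`.
The term `KS` removes half of `2KΔᴴL*` and the `KKᴴ` of `Γ⁻¹`, while `KSᴴ` removes the `KKᴴ` of `Π`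
in `ΠΔLᵀK` and supplies `KLᵀΔ`; the terms left over pair up into the two skew-Hermitian parts.
-/

section General

variable {R m n : Type*}

theorem conjTranspose_map_star [InvolutiveStar R] (L : Matrix m n R) : (L.map star)ᴴ = Lᵀ := by
  rw [← transpose_conjTranspose, conjTranspose_conjTranspose]

variable [Ring R]

theorem mul_one_sub_mul_of_mul_eq_one [Fintype m] [Fintype n] [DecidableEq m] [DecidableEq n]
    {A : Matrix n m R} {B : Matrix m n R} (h : A * B = 1) : A * (1 - B * A) = 0 := by
  rw [Matrix.mul_sub, Matrix.mul_one, ← Matrix.mul_assoc, h, Matrix.one_mul, sub_self]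

theorem mul_one_add_mul_of_mul_eq_one [Fintype m] [Fintype n] [DecidableEq m] [DecidableEq n]
    {A : Matrix n m R} {B : Matrix m n R} (h : A * B = 1) : A * (1 + B * A) = (2 : R) • A := by
  rw [Matrix.mul_add, Matrix.mul_one, ← Matrix.mul_assoc, h, Matrix.one_mul, two_smul]

variable [StarRing R]

/-- The skew-Hermitian part `(M - Mᴴ)/2` of a square matrix over a star ring in which `2` is
invertible; over `ℂ` it is `skewPart`. -/
def skewHermitianPart [Invertible (2 : R)] (M : Matrix n n R) : Matrix n n R :=
  (⅟2 : R) • (M - Mᴴ)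

theorem skewHermitianPart_add_self [Invertible (2 : R)] (M : Matrix n n R) :
    skewHermitianPart M + skewHermitianPart M = M - Mᴴ :=
  invOf_two_smul_add_invOf_two_smul R _

variable [Fintype m] [Fintype n]

/-- The map `P_T(X) = X - K(KᴴX + XᴴK)/2`, which for `KᴴK = 1` is the projection onto the tangent
space at `K` of the Stiefel manifold; `K` ranges over all matrices here. -/
def stiefelTangentProj [Invertible (2 : R)] (K X : Matrix m n R) : Matrix m n R :=
  X - (⅟2 : R) • (K * (Kᴴ * X + Xᴴ * K))

theorem stiefelTangentProj_eq_of_conjTranspose_mul_eq [Invertible (2 : R)] {K X : Matrix m n R}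
    {S : Matrix n n R} (hS : Kᴴ * X = (2 : R) • S) :
    stiefelTangentProj K X = X - K * (S + Sᴴ) := by
  have hS_adjoint : Xᴴ * K = (2 : R) • Sᴴ := by
    simpa only [conjTranspose_mul, conjTranspose_conjTranspose, two_smul, conjTranspose_add]
      using congrArg conjTranspose hS
  have hsum : K * (Kᴴ * X + Xᴴ * K) = (2 : R) • (K * (S + Sᴴ)) := by
    rw [hS, hS_adjoint, ← smul_add, two_smul, two_smul, Matrix.mul_add]
  rw [stiefelTangentProj, hsum, invOf_smul_smul]

variable [DecidableEq m]

/-- The map `f_K(Δ) = 2KΔᴴL* + Γ⁻¹L*ΔᴴK - ΠΔKᴴL* - ΠΔLᵀK` over a star ring, where `Π = 1 - KKᴴ`,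
`Γ⁻¹ = 1 + KKᴴ` and `L* = L.map star`; over `ℂ` it is `stiefelFK`. -/
def stiefelMap (K L Δ : Matrix m n R) : Matrix m n R :=
  (2 : R) • (K * Δᴴ * L.map star) + (1 + K * Kᴴ) * L.map star * Δᴴ * K -
    (1 - K * Kᴴ) * Δ * Kᴴ * L.map star - (1 - K * Kᴴ) * Δ * Lᵀ * K

variable [DecidableEq n] {K : Matrix m n R}

theorem conjTranspose_mul_stiefelMap (hK : Kᴴ * K = 1) (L Δ : Matrix m n R) :
    Kᴴ * stiefelMap K L Δ =
      (2 : R) • (Δᴴ * L.map star + Kᴴ * L.map star * Δᴴ * K) := by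
  rw [stiefelMap, two_smul, Matrix.mul_sub, Matrix.mul_sub, Matrix.mul_add, Matrix.mul_add]
  simp only [← Matrix.mul_assoc, hK, mul_one_sub_mul_of_mul_eq_one hK,
    mul_one_add_mul_of_mul_eq_one hK, Matrix.one_mul, Matrix.zero_mul, sub_zero, Matrix.smul_mul]
  rw [← two_smul R, smul_add]

theorem stiefel_fK_projection_general [Invertible (2 : R)] (hK : Kᴴ * K = 1)
    (L Δ : Matrix m n R) :
    stiefelTangentProj K (stiefelMap K L Δ) =
      -((1 - K * Kᴴ) * Δ * Kᴴ * L.map star) -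
        (2 : R) • (skewHermitianPart (Δ * Lᵀ) * K) -
        (2 : R) • (K * skewHermitianPart (Lᵀ * Δ)) := by
  have hadjoint : (Δᴴ * L.map star + Kᴴ * L.map star * Δᴴ * K)ᴴ =
      Lᵀ * Δ + Kᴴ * Δ * Lᵀ * K := by
    simp only [conjTranspose_add, conjTranspose_mul, conjTranspose_conjTranspose,
      conjTranspose_map_star, Matrix.mul_assoc]
  calc stiefelTangentProj K (stiefelMap K L Δ)
      = stiefelMap K L Δ - K * ((Δᴴ * L.map star + Kᴴ * L.map star * Δᴴ * K) +
          (Lᵀ * Δ + Kᴴ * Δ * Lᵀ * K)) := by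
        rw [stiefelTangentProj_eq_of_conjTranspose_mul_eq (conjTranspose_mul_stiefelMap hK L Δ),
          hadjoint]
    _ = -((1 - K * Kᴴ) * Δ * Kᴴ * L.map star) - (Δ * Lᵀ - (Δ * Lᵀ)ᴴ) * K -
          K * (Lᵀ * Δ - (Lᵀ * Δ)ᴴ) := by
        simp only [stiefelMap, two_smul, conjTranspose_mul, transpose_conjTranspose,
          Matrix.mul_add, Matrix.mul_sub, Matrix.add_mul, Matrix.sub_mul, Matrix.one_mul,
          Matrix.mul_assoc]
        abel
    _ = _ := by
        rw [two_smul, two_smul, ← Matrix.add_mul, ← Matrix.mul_add, skewHermitianPart_add_self,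
          skewHermitianPart_add_self]

end General

theorem skewPart_eq_skewHermitianPart {n : ℕ} (M : Matrix (Fin n) (Fin n) ℂ) :
    skewPart M = skewHermitianPart M := by
  rw [skewPart, skewHermitianPart, one_div, invOf_eq_inv]

theorem stiefelFK_eq_stiefelMap {D d : ℕ} (K L Δ : Matrix (Fin D) (Fin d) ℂ) :
    stiefelFK K L Δ = stiefelMap K L Δ :=
  rfl

/-- for every tangent vector `Δ` at the isometry `K`, the
tangent-space projection `P_T(X) = X − K(KᴴX + XᴴK)/2` satisfies
`P_T(f_K(Δ)) = −ΠΔKᴴL* − 2 skew(ΔLᵀ)K − 2K skew(LᵀΔ)`. -/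
theorem stiefel_fK_projection {D d : ℕ} (K L : Matrix (Fin D) (Fin d) ℂ)
    (hK : Kᴴ * K = 1) :
    ∀ Δ : Matrix (Fin D) (Fin d) ℂ, Kᴴ * Δ = -(Δᴴ * K) →
      stiefelFK K L Δ -
          (1 / 2 : ℂ) • (K * (Kᴴ * stiefelFK K L Δ + (stiefelFK K L Δ)ᴴ * K)) =
        -(((1 : Matrix (Fin D) (Fin D) ℂ) - K * Kᴴ) * Δ * Kᴴ *
            L.map (starRingEnd ℂ)) -
          (2 : ℂ) • (skewPart (Δ * Lᵀ) * K) -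
          (2 : ℂ) • (K * skewPart (Lᵀ * Δ)) := by
  intro Δ _
  simp only [stiefelFK_eq_stiefelMap, skewPart_eq_skewHermitianPart, one_div, ← invOf_eq_inv]
  exact stiefel_fK_projection_general hK L Δ
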